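/- A matrix A ∈ M_{2n}(ℂ) is normal, Hamiltonian, and symplectically diagonalizable if and only if A = N − N⋆ for some normal matrix N ∈ M_{2n}(ℂ) satisfying NN⋆ = N⋆N = 0, where N⋆ = J⁻¹NᴴJ with J = J_{2n}. -/

import Mathlib

open Matrix

/-- The matrix `J_{2n} = [[0, I], [-I, 0]]`. -/
def Jmat (n : ℕ) : Matrix (Fin n ⊕ Fin n) (Fin n ⊕ Fin n) ℂ :=
  Matrix.fromBlocks 0 1 (-1) 0

/-!
Both sides are equivalent to `A = U diag(d, -d̄) Uᴴ` for some vector `d` and some unitary `U` that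
commutes with `J`, that is, some unitary symplectic `U`.

If a symplectic `S` diagonalizes a normal `A`, then so does its unitary polar factor `U`, because
the Fuglede theorem makes `|S|` commute with the diagonal matrix. Moreover `Sᴴ J S = J` reads
`J S J⁻¹ = (Sᴴ)⁻¹`, and since `(Sᴴ)⁻¹ = U |S|⁻¹`, uniqueness of the polar decomposition gives
`J U J⁻¹ = U`. The Hamiltonian condition then fixes the second half of the diagonal.

If `N` is normal, write `N = W diag(μ) Wᴴ`, where `W` has orthonormal columns and no `μ i`
vanishes. Then `N N⋆ = 0` amounts to `Wᴴ J W = 0`. For such a `W` with blocks `X` and `Y`, the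
matrices `X + iY` and `X - iY`, which describe the components of `W` in the two eigenspaces of `J`,
again have orthonormal columns. Completing each of them to a unitary matrix completes `W` to a
unitary symplectic matrix, with the columns of `W` in the first half.
-/

theorem eq_conjStarAlgAut_iff_semiconjBy {S R : Type*} [CommSemiring S] [Semiring R]
    [StarMul R] [Algebra S R] {u : unitary R} {x y : R} :
    y = Unitary.conjStarAlgAut S R u x ↔ SemiconjBy (u : R) x y := by
  rw [Unitary.conjStarAlgAut_apply]
  constructor
  · rintro rfl
    rw [SemiconjBy, mul_assoc, Unitary.star_mul_self_of_mem u.2, mul_one]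
  · intro h
    rw [h.eq, mul_assoc, Unitary.mul_star_self_of_mem u.2, mul_one]

section Polar

variable {𝒜 : Type*} [CStarAlgebra 𝒜] [PartialOrder 𝒜] [StarOrderedRing 𝒜]

theorem isUnit_cfcAbs (s : 𝒜ˣ) : IsUnit (CFC.abs (s : 𝒜)) :=
  (CFC.isUnit_sqrt_iff (star (s : 𝒜) * s) (star_mul_self_nonneg _)).mpr (s.isUnit.star.mul s.isUnit)

/-- The unitary factor of the polar decomposition `s = polarUnitary s * |s|` of an invertible
element of a C⋆-algebra. -/
noncomputable def polarUnitary (s : 𝒜ˣ) : unitary 𝒜 :=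
  ⟨s * ↑(isUnit_cfcAbs s).unit⁻¹, (Units.mul_inv_mem_unitary _ _).mpr <| Units.ext <| by
    simp [(CFC.abs_nonneg (s : 𝒜)).isSelfAdjoint.star_eq, CFC.abs_mul_abs]⟩

theorem polarUnitary_mul_abs (s : 𝒜ˣ) : (polarUnitary s : 𝒜) * CFC.abs (s : 𝒜) = s := by
  simp [polarUnitary, mul_assoc]

theorem polarUnitary_eq_of_eq_mul {s : 𝒜ˣ} {u : unitary 𝒜} {p : 𝒜} (hp : 0 ≤ p)
    (h : (s : 𝒜) = u * p) : polarUnitary s = u := by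
  have abs_eq : CFC.abs (s : 𝒜) = p :=
    CFC.sqrt_unique (by
      rw [h, star_mul, hp.isSelfAdjoint.star_eq, mul_assoc p, ← mul_assoc (star _),
        Unitary.coe_star_mul_self, one_mul]) hp
  refine Subtype.ext ((isUnit_cfcAbs s).mul_left_injective ?_)
  simp only [polarUnitary_mul_abs]
  rw [abs_eq, h]

theorem semiconjBy_polarUnitary {s : 𝒜ˣ} {a d : 𝒜} [ha : IsStarNormal a] [hd : IsStarNormal d]
    (h : SemiconjBy (s : 𝒜) d a) : SemiconjBy (polarUnitary s : 𝒜) d a := by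
  have h_star : SemiconjBy (star (s : 𝒜)) a d := by
    simpa using semiconjBy_star_star_star.mpr (h.star_right hd ha)
  have h_abs : Commute (CFC.abs (s : 𝒜)) d := Commute.cfcₙ_nnreal (h_star.mul_left h) _
  refine (isUnit_cfcAbs s).mul_left_injective ?_
  calc polarUnitary s * d * CFC.abs (s : 𝒜) = s * d := by
        rw [mul_assoc, ← h_abs.eq, ← mul_assoc, polarUnitary_mul_abs]
    _ = a * polarUnitary s * CFC.abs (s : 𝒜) := by
        rw [h.eq, mul_assoc, polarUnitary_mul_abs]

theorem polarUnitary_conj (v : unitary 𝒜) (s : 𝒜ˣ) :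
    polarUnitary (Unitary.toUnits v * s * (Unitary.toUnits v)⁻¹) = v * polarUnitary s * star v := by
  refine polarUnitary_eq_of_eq_mul
    (star_right_conjugate_nonneg (CFC.abs_nonneg (s : 𝒜)) (v : 𝒜)) ?_
  calc (v : 𝒜) * s * star (v : 𝒜)
      = v * polarUnitary s * CFC.abs (s : 𝒜) * star (v : 𝒜) := by
        rw [mul_assoc (v : 𝒜) (polarUnitary s : 𝒜), polarUnitary_mul_abs]
    _ = v * polarUnitary s * (star (v : 𝒜) * v) * CFC.abs (s : 𝒜) * star (v : 𝒜) := by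
        rw [Unitary.coe_star_mul_self, mul_one]
    _ = ↑(v * polarUnitary s * star v) * (v * CFC.abs (s : 𝒜) * star (v : 𝒜)) := by
        simp only [Submonoid.coe_mul, Unitary.coe_star, mul_assoc]

theorem polarUnitary_star_inv (s : 𝒜ˣ) : polarUnitary (star s)⁻¹ = polarUnitary s := by
  set p := (isUnit_cfcAbs s).unit
  have star_p : star p = p := Units.ext (CFC.abs_nonneg (s : 𝒜)).isSelfAdjoint
  refine polarUnitary_eq_of_eq_mul (p := ↑p⁻¹) ?_ ?_
  · rw [← Ring.inverse_unit, IsUnit.unit_spec]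
    exact (CFC.ringInverse_nonneg_iff_nonneg_of_isUnit (isUnit_cfcAbs s)).mpr (CFC.abs_nonneg _)
  · have : s = Unitary.toUnits (polarUnitary s) * p := Units.ext (polarUnitary_mul_abs s).symm
    conv_lhs => rw [this, star_mul, star_p, _root_.mul_inv_rev]
    simp [← Unitary.star_eq_inv]

theorem commute_polarUnitary {j : unitary 𝒜} {s : 𝒜ˣ} (h : star (s : 𝒜) * j * s = j) :
    Commute (polarUnitary s) j := by
  have conj_eq : Unitary.toUnits j * s * (Unitary.toUnits j)⁻¹ = (star s)⁻¹ := by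
    rw [mul_inv_eq_iff_eq_mul, eq_inv_mul_iff_mul_eq, ← mul_assoc]
    exact Units.ext h
  have := polarUnitary_conj j s
  rw [conj_eq, polarUnitary_star_inv] at this
  exact eq_mul_inv_iff_mul_eq.mp this

end Polar

section NormalOperator

open ContinuousLinearMap Module Module.End

variable {𝕜 E : Type*} [RCLike 𝕜] [NormedAddCommGroup E] [InnerProductSpace 𝕜 E] [CompleteSpace E]
  (T : E →L[𝕜] E) [IsStarNormal T]

theorem adjoint_apply_of_mem_eigenspace {μ : 𝕜} {v : E}
    (hv : v ∈ eigenspace (T : End 𝕜 E) μ) : adjoint T v = star μ • v := by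
  have : IsStarNormal (T - μ • 1) := by
    have : Commute T (star (μ • 1)) := by
      simpa using (Commute.one_right T).smul_right (star μ)
    have : IsStarNormal (μ • (1 : E →L[𝕜] E)) := inferInstance
    exact Commute.isStarNormal_sub ‹_›
  have h := (this.adjoint_apply_eq_zero_iff v).mpr <| by
    simpa [sub_eq_zero] using mem_eigenspace_iff.mp hv
  simpa [sub_eq_zero, ← ContinuousLinearMap.star_eq_adjoint] using h

theorem orthogonalFamily_eigenspace :
    OrthogonalFamily 𝕜 (fun μ => eigenspace (T : End 𝕜 E) μ)
      fun μ => (eigenspace (T : End 𝕜 E) μ).subtypeₗᵢ := by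
  rintro μ ν hμν ⟨v, hv⟩ ⟨w, hw⟩
  have h := adjoint_inner_left T w v
  rw [adjoint_apply_of_mem_eigenspace T hv, show T w = ν • w from mem_eigenspace_iff.mp hw,
    inner_smul_left, inner_smul_right] at h
  simpa [hμν] using h

theorem apply_mem_orthogonal_iSup_eigenspace {v : E}
    (hv : v ∈ (⨆ μ, eigenspace (T : End 𝕜 E) μ)ᗮ) :
    (T : End 𝕜 E) v ∈ (⨆ μ, eigenspace (T : End 𝕜 E) μ)ᗮ := by
  rw [← Submodule.iInf_orthogonal, Submodule.mem_iInf] at hv ⊢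
  intro μ w hw
  rw [coe_coe, ← adjoint_inner_left, adjoint_apply_of_mem_eigenspace T hw]
  exact hv μ _ (Submodule.smul_mem _ _ hw)

end NormalOperator

section SpectralTheorem

open ContinuousLinearMap Module Module.End

variable {E : Type*} [NormedAddCommGroup E] [InnerProductSpace ℂ E] [FiniteDimensional ℂ E]

theorem orthogonal_iSup_eigenspace_eq_bot (T : E →L[ℂ] E) [IsStarNormal T] :
    (⨆ μ, eigenspace (T : End ℂ E) μ)ᗮ = ⊥ := by
  set p := (⨆ μ, eigenspace (T : End ℂ E) μ)ᗮ
  have hp : ∀ v ∈ p, (T : End ℂ E) v ∈ p := fun v => apply_mem_orthogonal_iSup_eigenspace T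
  by_contra hne
  have : Nontrivial p := Submodule.nontrivial_iff_ne_bot.mpr hne
  obtain ⟨μ, hμ⟩ := exists_eigenvalue ((T : End ℂ E).restrict hp)
  have ortho : eigenspace (T : End ℂ E) μ ⟂ p :=
    (Submodule.isOrtho_orthogonal_right _).mono_left (le_iSup _ _)
  exact hμ (eigenspace_restrict_eq_bot hp ortho.disjoint)

theorem exists_orthonormalBasis_apply_eq_smul {ι : Type*} [Fintype ι]
    (hι : finrank ℂ E = Fintype.card ι) (T : E →L[ℂ] E) [IsStarNormal T] :
    ∃ (b : OrthonormalBasis ι ℂ E) (μ : ι → ℂ), ∀ i, T (b i) = μ i • b i := by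
  have ortho : OrthogonalFamily ℂ (fun μ : Eigenvalues (T : End ℂ E) => eigenspace (T : End ℂ E) μ)
      fun μ => (eigenspace (T : End ℂ E) μ).subtypeₗᵢ :=
    (orthogonalFamily_eigenspace T).comp Subtype.coe_injective
  have isInternal : DirectSum.IsInternal
      fun μ : Eigenvalues (T : End ℂ E) => eigenspace (T : End ℂ E) μ := by
    refine ortho.isInternal_iff.mpr ?_
    change (⨆ μ : {μ // eigenspace (T : End ℂ E) μ ≠ ⊥}, eigenspace (T : End ℂ E) μ)ᗮ = ⊥
    rw [iSup_ne_bot_subtype, orthogonal_iSup_eigenspace_eq_bot]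
  let e := Fintype.equivFin ι
  refine ⟨(isInternal.subordinateOrthonormalBasis hι ortho).reindex e.symm,
    fun i => (isInternal.subordinateOrthonormalBasisIndex hι (e i) ortho :
      Eigenvalues (T : End ℂ E)), fun i => ?_⟩
  simpa using mem_eigenspace_iff.mp
    (isInternal.subordinateOrthonormalBasis_subordinate hι (e i) ortho)

end SpectralTheorem

section Frames

variable {m ι 𝕜 : Type*} [Fintype m] [DecidableEq ι] [RCLike 𝕜]

theorem orthonormal_col_iff (W : Matrix m ι 𝕜) :
    Orthonormal 𝕜 (fun j => WithLp.toLp 2 (W.col j)) ↔ Wᴴ * W = 1 := by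
  rw [orthonormal_iff_ite, ← Matrix.ext_iff]
  simp [mul_apply, one_apply, PiLp.inner_apply, mul_comm]

theorem of_orthonormalBasis_mem_unitaryGroup [DecidableEq m]
    (b : OrthonormalBasis m 𝕜 (EuclideanSpace 𝕜 m)) :
    of (fun i j => b j i) ∈ unitaryGroup m 𝕜 :=
  mem_unitaryGroup_iff'.mpr ((orthonormal_col_iff _).mp b.orthonormal)

theorem card_le_of_conjTranspose_mul_self_eq_one [Fintype ι] {W : Matrix m ι 𝕜}
    (hW : Wᴴ * W = 1) : Fintype.card ι ≤ Fintype.card m := by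
  simpa using ((orthonormal_col_iff W).mpr hW).linearIndependent.fintype_card_le_finrank

theorem exists_unitaryGroup_submatrix_eq [DecidableEq m] {W : Matrix m ι 𝕜} (hW : Wᴴ * W = 1)
    (f : ι ↪ m) : ∃ U : unitaryGroup m 𝕜, (U : Matrix m m 𝕜).submatrix id f = W := by
  have extend_apply (j : ι) := f.injective.extend_apply (fun j => WithLp.toLp 2 (W.col j)) 0 j
  have ortho : Orthonormal 𝕜 ((Set.range f).domRestrict
      (Function.extend f (fun j => WithLp.toLp 2 (W.col j)) 0)) := by
    rw [orthonormal_iff_ite]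
    rintro ⟨_, i, rfl⟩ ⟨_, j, rfl⟩
    simpa [Set.domRestrict, extend_apply, Subtype.ext_iff] using
      orthonormal_iff_ite.mp ((orthonormal_col_iff W).mpr hW) i j
  obtain ⟨b, hb⟩ := ortho.exists_orthonormalBasis_extension_of_card_eq (by simp)
  refine ⟨⟨_, of_orthonormalBasis_mem_unitaryGroup b⟩, ?_⟩
  ext i j
  simp [hb (f j) ⟨j, rfl⟩, extend_apply]

end Frames

section NormalMatrix

variable {m ι : Type*} [Fintype m] [DecidableEq m]

theorem isStarNormal_diagonal {R : Type*} [CommSemiring R] [StarRing R] (d : m → R) :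
    IsStarNormal (diagonal d) := by
  rw [isStarNormal_iff, star_eq_conjTranspose, diagonal_conjTranspose]
  exact commute_diagonal _ _

theorem exists_eq_conjStarAlgAut_diagonal (N : Matrix m m ℂ) [hN : IsStarNormal N] :
    ∃ (U : unitaryGroup m ℂ) (μ : m → ℂ), N = Unitary.conjStarAlgAut ℂ _ U (diagonal μ) := by
  have : IsStarNormal (toEuclideanCLM (n := m) (𝕜 := ℂ) N) := hN.map _
  obtain ⟨b, μ, hμ⟩ := exists_orthonormalBasis_apply_eq_smul
    (finrank_euclideanSpace (𝕜 := ℂ) (ι := m))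
    (toEuclideanCLM (n := m) (𝕜 := ℂ) N)
  refine ⟨⟨_, of_orthonormalBasis_mem_unitaryGroup b⟩, μ,
    eq_conjStarAlgAut_iff_semiconjBy.mpr (Matrix.ext fun i j => ?_)⟩
  rw [mul_diagonal, mul_comm]
  exact congrFun (congrArg WithLp.ofLp (hμ j).symm) i

theorem submatrix_mul_diagonal_mul_submatrix {l R : Type*} [Semiring R] [Fintype ι]
    [DecidableEq ι] (A : Matrix l m R) (B : Matrix m l R) {g : ι → m} (hg : g.Injective)
    (μ : ι → R) : A.submatrix id g * diagonal μ * B.submatrix g id =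
      A * diagonal (Function.extend g μ 0) * B := by
  ext i j
  rw [mul_apply, mul_apply]
  refine Fintype.sum_of_injective g hg _ _ (fun k hk => ?_) fun k => ?_
  · simp [Function.extend_apply' μ (0 : m → R) k (by simpa using hk)]
  · simp [hg.extend_apply]

theorem exists_eq_mul_diagonal_mul_conjTranspose (N : Matrix m m ℂ) [IsStarNormal N] :
    ∃ (s : Finset m) (W : Matrix m s ℂ) (μ : s → ℂ),
      Wᴴ * W = 1 ∧ (∀ i, μ i ≠ 0) ∧ N = W * diagonal μ * Wᴴ := by
  obtain ⟨U, μ, rfl⟩ := exists_eq_conjStarAlgAut_diagonal N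
  let s := Finset.univ.filter (μ · ≠ 0)
  have extend_eq : Function.extend ((↑) : s → m) (fun i => μ i) 0 = μ := by
    ext i
    by_cases hi : i ∈ s
    · exact Subtype.val_injective.extend_apply (fun i : s => μ i) 0 ⟨i, hi⟩
    · rw [Function.extend_apply' _ _ _ (by simpa using hi)]
      simpa [s, eq_comm] using hi
  refine ⟨s, (U : Matrix m m ℂ).submatrix id (↑), fun i => μ i, ?_, fun i => ?_, ?_⟩
  · rw [conjTranspose_submatrix, ← submatrix_mul _ _ _ _ _ Function.bijective_id,
      ← star_eq_conjTranspose, Unitary.coe_star_mul_self]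
    exact submatrix_one _ Subtype.val_injective
  · exact (Finset.mem_filter.mp i.2).2
  · rw [conjTranspose_submatrix, submatrix_mul_diagonal_mul_submatrix _ _ Subtype.val_injective,
      extend_eq, Unitary.conjStarAlgAut_apply]
    rfl

end NormalMatrix

theorem conjTranspose_mul_mul_eq_zero_of_mul_diagonal_mul {m ι R : Type*} [Fintype m] [Fintype ι]
    [DecidableEq ι] [Semiring R] [NoZeroDivisors R] [StarRing R] {W : Matrix m ι R} {μ : ι → R}
    {K : Matrix m m R} (hW : Wᴴ * W = 1) (hμ : ∀ i, μ i ≠ 0)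
    (h : W * diagonal μ * Wᴴ * K * (W * diagonal μ * Wᴴ)ᴴ = 0) :
    Wᴴ * K * W = 0 := by
  have diagonal_conj_eq_zero : diagonal μ * (Wᴴ * K * W) * diagonal (star μ) = 0 :=
    calc diagonal μ * (Wᴴ * K * W) * diagonal (star μ)
        = Wᴴ * W * diagonal μ * Wᴴ * K * W * diagonal (star μ) * (Wᴴ * W) := by
          simp only [hW, Matrix.mul_assoc, Matrix.one_mul, Matrix.mul_one]
      _ = Wᴴ * (W * diagonal μ * Wᴴ * K * (W * diagonal μ * Wᴴ)ᴴ) * W := by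
          simp only [conjTranspose_mul, conjTranspose_conjTranspose, diagonal_conjTranspose,
            Matrix.mul_assoc]
      _ = 0 := by rw [h, Matrix.mul_zero, Matrix.zero_mul]
  ext i j
  simpa [hμ] using congr_fun₂ diagonal_conj_eq_zero i j

section UnitarySymplectic

variable {l ι : Type*}

/-- The matrix that acts as `P` on the eigenspace `ker (J + i)` and as `Q` on the eigenspace
`ker (J - i)` of `J = Matrix.J l ℂ`, both identified with `ℂˡ` by the first block of coordinates.
For unitary `P` and `Q` these are the unitary symplectic matrices. -/
noncomputable def eigenspaceBlocks (P Q : Matrix l l ℂ) : Matrix (l ⊕ l) (l ⊕ l) ℂ :=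
  fromBlocks ((1 / 2 : ℂ) • (P + Q)) (-((Complex.I / 2) • (P - Q)))
    ((Complex.I / 2) • (P - Q)) ((1 / 2 : ℂ) • (P + Q))

theorem eigenspaceBlocks_one [DecidableEq l] : eigenspaceBlocks (1 : Matrix l l ℂ) 1 = 1 := by
  rw [eigenspaceBlocks, sub_self, smul_zero, neg_zero, ← two_smul ℂ (1 : Matrix l l ℂ), smul_smul]
  simp

theorem eigenspaceBlocks_conjTranspose (P Q : Matrix l l ℂ) :
    (eigenspaceBlocks P Q)ᴴ = eigenspaceBlocks Pᴴ Qᴴ := by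
  simp [eigenspaceBlocks, fromBlocks_conjTranspose, neg_div]

variable [Fintype l]

theorem eigenspaceBlocks_mul (P Q P' Q' : Matrix l l ℂ) :
    eigenspaceBlocks P Q * eigenspaceBlocks P' Q' = eigenspaceBlocks (P * P') (Q * Q') := by
  have I_half_sq : Complex.I / 2 * (Complex.I / 2) = -(1 / 4) := by
    linear_combination (1 / 4) * Complex.I_mul_I
  simp only [eigenspaceBlocks, fromBlocks_multiply, neg_mul, mul_neg, smul_mul_smul_comm,
    add_mul, mul_add, sub_mul, mul_sub, I_half_sq]
  congr 1 <;> module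

variable [DecidableEq l]

theorem eigenspaceBlocks_mem_unitaryGroup (P Q : unitaryGroup l ℂ) :
    eigenspaceBlocks (P : Matrix l l ℂ) Q ∈ unitaryGroup (l ⊕ l) ℂ := by
  rw [mem_unitaryGroup_iff', star_eq_conjTranspose, eigenspaceBlocks_conjTranspose,
    eigenspaceBlocks_mul, ← star_eq_conjTranspose, ← star_eq_conjTranspose,
    Unitary.star_mul_self_of_mem P.2, Unitary.star_mul_self_of_mem Q.2, eigenspaceBlocks_one]

theorem commute_eigenspaceBlocks_J (P Q : Matrix l l ℂ) :
    Commute (eigenspaceBlocks P Q) (J l ℂ) := by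
  simp [commute_iff_eq, eigenspaceBlocks, J, fromBlocks_multiply, smul_sub]

theorem conjTranspose_mul_self_add_smul_eq_one [DecidableEq ι] {X Y : Matrix l ι ℂ}
    (h_gram : (fromRows X Y)ᴴ * fromRows X Y = 1)
    (h_isotropic : (fromRows X Y)ᴴ * J l ℂ * fromRows X Y = 0) {z : ℂ} (hz : z * z = -1)
    (hz_star : star z = -z) : (X + z • Y)ᴴ * (X + z • Y) = 1 := by
  have h_gram : Xᴴ * X + Yᴴ * Y = 1 := by
    simpa [conjTranspose_fromRows_eq_fromCols_conjTranspose, fromCols_mul_fromRows] using h_gram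
  have h_isotropic : Yᴴ * X - Xᴴ * Y = 0 := by
    simpa [conjTranspose_fromRows_eq_fromCols_conjTranspose, fromCols_mul_fromRows, J,
      fromCols_mul_fromBlocks, sub_eq_add_neg] using h_isotropic
  calc (X + z • Y)ᴴ * (X + z • Y)
      = Xᴴ * X - (z * z) • (Yᴴ * Y) - z • (Yᴴ * X - Xᴴ * Y) := by
        simp only [conjTranspose_add, conjTranspose_smul, hz_star, Matrix.add_mul,
          Matrix.mul_add, Matrix.smul_mul, Matrix.mul_smul]
        module
    _ = 1 := by rw [hz, h_isotropic, ← h_gram]; module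

theorem exists_unitaryGroup_commute_J_submatrix_eq [Finite ι] [DecidableEq ι]
    {W : Matrix (l ⊕ l) ι ℂ} (h_gram : Wᴴ * W = 1) (h_isotropic : Wᴴ * J l ℂ * W = 0) :
    ∃ U : unitaryGroup (l ⊕ l) ℂ, Commute (U : Matrix (l ⊕ l) (l ⊕ l) ℂ) (J l ℂ) ∧
      ∃ f : ι ↪ l, (U : Matrix (l ⊕ l) (l ⊕ l) ℂ).submatrix id (Sum.inl ∘ f) = W := by
  obtain ⟨X, Y, rfl⟩ : ∃ X Y, W = fromRows X Y := ⟨_, _, (fromRows_toRows W).symm⟩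
  have h_sub := conjTranspose_mul_self_add_smul_eq_one h_gram h_isotropic (z := -Complex.I)
    (by simp) (by simp)
  have h_add := conjTranspose_mul_self_add_smul_eq_one h_gram h_isotropic Complex.I_mul_I
    Complex.conj_I
  have := Fintype.ofFinite ι
  obtain ⟨f⟩ : Nonempty (ι ↪ l) := Function.Embedding.nonempty_of_card_le
    (card_le_of_conjTranspose_mul_self_eq_one h_add)
  obtain ⟨P, hP⟩ := exists_unitaryGroup_submatrix_eq h_sub f
  obtain ⟨Q, hQ⟩ := exists_unitaryGroup_submatrix_eq h_add f
  refine ⟨⟨_, eigenspaceBlocks_mem_unitaryGroup P Q⟩, commute_eigenspaceBlocks_J _ _, f, ?_⟩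
  have h_first_cols : (eigenspaceBlocks (P : Matrix l l ℂ) Q).submatrix id (Sum.inl ∘ f) =
      fromRows
        ((1 / 2 : ℂ) •
          ((P : Matrix l l ℂ).submatrix id f + (Q : Matrix l l ℂ).submatrix id f))
        ((Complex.I / 2) •
          ((P : Matrix l l ℂ).submatrix id f - (Q : Matrix l l ℂ).submatrix id f)) := by
    ext (i | i) j <;> rfl
  rw [h_first_cols, hP, hQ]
  congr 1
  · module
  · calc (Complex.I / 2) • (X + -Complex.I • Y - (X + Complex.I • Y))
        = (-(Complex.I * Complex.I)) • Y := by module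
      _ = Y := by rw [Complex.I_mul_I, neg_neg, one_smul]

end UnitarySymplectic

section SymplecticAdjoint

variable {l R : Type*} [DecidableEq l] [CommRing R] [StarRing R]

theorem J_conjTranspose : (J l R)ᴴ = -J l R := by
  simp [J, fromBlocks_conjTranspose, fromBlocks_neg]

variable [Fintype l]

/-- The symplectic adjoint `M⋆ = J⁻¹ Mᴴ J` of a matrix `M`, with `J⁻¹` written as `Jᵀ`. Replacing
Mathlib's `J = [[0, -I], [I, 0]]` by `-J` does not change it. -/
def symplecticAdjoint (M : Matrix (l ⊕ l) (l ⊕ l) R) : Matrix (l ⊕ l) (l ⊕ l) R :=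
  (J l R)ᵀ * Mᴴ * J l R

theorem J_mem_unitaryGroup : J l R ∈ unitaryGroup (l ⊕ l) R := by
  rw [mem_unitaryGroup_iff, star_eq_conjTranspose, J_conjTranspose, mul_neg, J_squared, neg_neg]

theorem symplecticAdjoint_fromBlocks (A B C D : Matrix l l R) :
    symplecticAdjoint (fromBlocks A B C D) = fromBlocks Dᴴ (-Bᴴ) (-Cᴴ) Aᴴ := by
  simp [symplecticAdjoint, J, fromBlocks_transpose, fromBlocks_conjTranspose, fromBlocks_multiply]

theorem symplecticAdjoint_diagonal (a b : l → R) :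
    symplecticAdjoint (diagonal (Sum.elim a b)) = diagonal (Sum.elim (star b) (star a)) := by
  simp [← fromBlocks_diagonal, symplecticAdjoint_fromBlocks]

theorem symplecticAdjoint_diagonal_eq_neg_iff {a b : l → R} :
    symplecticAdjoint (diagonal (Sum.elim a b)) = -diagonal (Sum.elim a b) ↔ b = -star a := by
  rw [symplecticAdjoint_diagonal, diagonal_neg, diagonal_injective.eq_iff, funext_iff, Sum.forall]
  constructor
  · rintro ⟨-, h⟩
    exact funext fun i => neg_eq_iff_eq_neg.mp (h i).symm
  · rintro rfl
    simp

theorem diagonal_mul_symplecticAdjoint_diagonal (d : l → R) :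
    diagonal (Sum.elim d 0) * symplecticAdjoint (diagonal (Sum.elim d 0)) = 0 := by
  rw [symplecticAdjoint_diagonal, diagonal_mul_diagonal, diagonal_eq_zero]
  ext (i | i) <;> simp

theorem isUnit_of_conjTranspose_mul_J_mul {S : Matrix (l ⊕ l) (l ⊕ l) R}
    (hS : Sᴴ * J l R * S = J l R) : IsUnit S :=
  IsUnit.of_mul_eq_one_right (-J l R * (Sᴴ * J l R)) <| by
    rw [Matrix.mul_assoc, hS, neg_mul, J_squared, neg_neg]

end SymplecticAdjoint

section NormalForm

variable {l : Type*} [Fintype l] [DecidableEq l]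

open scoped ComplexOrder MatrixOrder Matrix.Norms.L2Operator in
theorem exists_unitaryGroup_commute_J_semiconjBy {S A D : Matrix (l ⊕ l) (l ⊕ l) ℂ}
    [IsStarNormal A] [IsStarNormal D] (hS : Sᴴ * J l ℂ * S = J l ℂ) (h : SemiconjBy S D A) :
    ∃ U : unitaryGroup (l ⊕ l) ℂ, Commute (U : Matrix (l ⊕ l) (l ⊕ l) ℂ) (J l ℂ) ∧
      SemiconjBy (U : Matrix (l ⊕ l) (l ⊕ l) ℂ) D A := by
  obtain ⟨s, rfl⟩ := isUnit_of_conjTranspose_mul_J_mul hS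
  have h_comm := commute_polarUnitary (j := ⟨_, J_mem_unitaryGroup⟩) hS
  exact ⟨polarUnitary s, congr_arg Subtype.val h_comm.eq, semiconjBy_polarUnitary h⟩

theorem symplecticAdjoint_conjStarAlgAut {U : unitaryGroup (l ⊕ l) ℂ}
    (hU : Commute (U : Matrix (l ⊕ l) (l ⊕ l) ℂ) (J l ℂ)) (M : Matrix (l ⊕ l) (l ⊕ l) ℂ) :
    symplecticAdjoint (Unitary.conjStarAlgAut ℂ _ U M) =
      Unitary.conjStarAlgAut ℂ _ U (symplecticAdjoint M) := by
  have map_J : Unitary.conjStarAlgAut ℂ _ U (J l ℂ) = J l ℂ :=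
    (eq_conjStarAlgAut_iff_semiconjBy.mpr hU).symm
  simp only [symplecticAdjoint, J_transpose, ← star_eq_conjTranspose, map_mul, map_neg, map_star,
    map_J]

theorem exists_eq_conjStarAlgAut_diagonal_of_mul_symplecticAdjoint_eq_zero
    {N : Matrix (l ⊕ l) (l ⊕ l) ℂ} [IsStarNormal N] (h : N * symplecticAdjoint N = 0) :
    ∃ U : unitaryGroup (l ⊕ l) ℂ, Commute (U : Matrix (l ⊕ l) (l ⊕ l) ℂ) (J l ℂ) ∧
      ∃ d : l → ℂ, N = Unitary.conjStarAlgAut ℂ _ U (diagonal (Sum.elim d 0)) := by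
  have h_range : N * J l ℂ * Nᴴ = 0 := by
    have : N * J l ℂ * Nᴴ = N * symplecticAdjoint N * J l ℂ := by
      simp [symplecticAdjoint, J_transpose, J_squared, Matrix.mul_assoc]
    rw [this, h, Matrix.zero_mul]
  obtain ⟨s, W, μ, h_gram, hμ, rfl⟩ := exists_eq_mul_diagonal_mul_conjTranspose N
  obtain ⟨U, hU, f, rfl⟩ := exists_unitaryGroup_commute_J_submatrix_eq h_gram
    (conjTranspose_mul_mul_eq_zero_of_mul_diagonal_mul h_gram hμ h_range)
  have extend_eq : Function.extend (Sum.inl ∘ f : s → l ⊕ l) μ 0 =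
      Sum.elim (Function.extend f μ 0) (0 : l → ℂ) := by
    ext (i | i)
    · by_cases hi : ∃ k, f k = i
      · obtain ⟨k, rfl⟩ := hi
        simpa [f.injective.extend_apply] using
          (Sum.inl_injective.comp f.injective).extend_apply μ (0 : l ⊕ l → ℂ) k
      · simp [Function.extend_apply', hi]
    · simp [Function.extend_apply']
  refine ⟨U, hU, Function.extend f μ 0, ?_⟩
  rw [conjTranspose_submatrix, submatrix_mul_diagonal_mul_submatrix _ _
    (Sum.inl_injective.comp f.injective), extend_eq, Unitary.conjStarAlgAut_apply]
  rfl

theorem exists_eq_sub_symplecticAdjoint_iff {A : Matrix (l ⊕ l) (l ⊕ l) ℂ} :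
    (∃ N, IsStarNormal N ∧ N * symplecticAdjoint N = 0 ∧ symplecticAdjoint N * N = 0 ∧
      A = N - symplecticAdjoint N) ↔
    ∃ U : unitaryGroup (l ⊕ l) ℂ, Commute (U : Matrix (l ⊕ l) (l ⊕ l) ℂ) (J l ℂ) ∧
      ∃ d : l → ℂ, A = Unitary.conjStarAlgAut ℂ _ U (diagonal (Sum.elim d (-star d))) := by
  have diagonal_sub (d : l → ℂ) : diagonal (Sum.elim d (-star d)) =
      diagonal (Sum.elim d 0) - symplecticAdjoint (diagonal (Sum.elim d 0)) := by
    rw [symplecticAdjoint_diagonal, diagonal_sub]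
    congr 1
    ext (i | i) <;> simp
  constructor
  · rintro ⟨N, _, h, -, rfl⟩
    obtain ⟨U, hU, d, rfl⟩ := exists_eq_conjStarAlgAut_diagonal_of_mul_symplecticAdjoint_eq_zero h
    exact ⟨U, hU, d, by rw [symplecticAdjoint_conjStarAlgAut hU, ← map_sub, diagonal_sub]⟩
  · rintro ⟨U, hU, d, rfl⟩
    refine ⟨Unitary.conjStarAlgAut ℂ _ U (diagonal (Sum.elim d 0)), ?_, ?_, ?_, ?_⟩
    · exact (isStarNormal_diagonal _).map _
    all_goals rw [symplecticAdjoint_conjStarAlgAut hU]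
    · rw [← map_mul, diagonal_mul_symplecticAdjoint_diagonal, map_zero]
    · rw [← map_mul, symplecticAdjoint_diagonal, (commute_diagonal _ _).eq,
        ← symplecticAdjoint_diagonal, diagonal_mul_symplecticAdjoint_diagonal, map_zero]
    · rw [← map_sub, diagonal_sub]

theorem normal_hamiltonian_symplecticallyDiagonalizable_iff {A : Matrix (l ⊕ l) (l ⊕ l) ℂ} :
    (IsStarNormal A ∧ symplecticAdjoint A = -A ∧
      ∃ S, Sᴴ * J l ℂ * S = J l ℂ ∧ (S⁻¹ * A * S).IsDiag) ↔
    ∃ U : unitaryGroup (l ⊕ l) ℂ, Commute (U : Matrix (l ⊕ l) (l ⊕ l) ℂ) (J l ℂ) ∧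
      ∃ d : l → ℂ, A = Unitary.conjStarAlgAut ℂ _ U (diagonal (Sum.elim d (-star d))) := by
  constructor
  · rintro ⟨_, h_hamiltonian, S, hS, h_diag⟩
    obtain ⟨a, b, h_eq⟩ : ∃ a b, S⁻¹ * A * S = diagonal (Sum.elim a b) :=
      ⟨_, _, by rw [Sum.elim_comp_inl_inr, h_diag.diagonal_diag]⟩
    have h_semiconj : SemiconjBy S (diagonal (Sum.elim a b)) A := by
      have := (isUnit_iff_isUnit_det S).mp (isUnit_of_conjTranspose_mul_J_mul hS)
      rw [SemiconjBy, ← h_eq, mul_assoc, mul_nonsing_inv_cancel_left _ _ this]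
    have := isStarNormal_diagonal (Sum.elim a b)
    obtain ⟨U, hU, hUA⟩ := exists_unitaryGroup_commute_J_semiconjBy hS h_semiconj
    obtain rfl := (eq_conjStarAlgAut_iff_semiconjBy (S := ℂ)).mpr hUA
    rw [symplecticAdjoint_conjStarAlgAut hU, ← map_neg, EquivLike.apply_eq_iff_eq,
      symplecticAdjoint_diagonal_eq_neg_iff] at h_hamiltonian
    exact ⟨U, hU, a, by rw [h_hamiltonian]⟩
  · rintro ⟨U, hU, d, rfl⟩
    refine ⟨(isStarNormal_diagonal _).map _, ?_, U, ?_, ?_⟩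
    · rw [symplecticAdjoint_conjStarAlgAut hU, symplecticAdjoint_diagonal_eq_neg_iff.mpr rfl,
        map_neg]
    · rw [mul_assoc, ← hU.eq, ← mul_assoc, ← star_eq_conjTranspose,
        Unitary.star_mul_self_of_mem U.2, one_mul]
    · rw [inv_eq_left_inv (Unitary.star_mul_self_of_mem U.2), mul_assoc,
        ← eq_conjStarAlgAut_iff_semiconjBy.mp rfl, ← mul_assoc, Unitary.star_mul_self_of_mem U.2,
        one_mul]
      exact isDiag_diagonal _

end NormalForm

theorem stmt16_general {l : Type*} [Fintype l] [DecidableEq l] (A : Matrix (l ⊕ l) (l ⊕ l) ℂ) :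
    (IsStarNormal A ∧ symplecticAdjoint A = -A ∧
      ∃ S, Sᴴ * J l ℂ * S = J l ℂ ∧ (S⁻¹ * A * S).IsDiag) ↔
    ∃ N, IsStarNormal N ∧ N * symplecticAdjoint N = 0 ∧ symplecticAdjoint N * N = 0 ∧
      A = N - symplecticAdjoint N :=
  normal_hamiltonian_symplecticallyDiagonalizable_iff.trans exists_eq_sub_symplecticAdjoint_iff.symm

theorem Jmat_eq_neg_J (n : ℕ) : Jmat n = -J (Fin n) ℂ := by
  simp [Jmat, J, fromBlocks_neg]

theorem stmt16 (n : ℕ) (A : Matrix (Fin n ⊕ Fin n) (Fin n ⊕ Fin n) ℂ) :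
    (Aᴴ * A = A * Aᴴ ∧ (Jmat n)ᵀ * Aᴴ * Jmat n = -A ∧
      ∃ S : Matrix (Fin n ⊕ Fin n) (Fin n ⊕ Fin n) ℂ,
        Sᴴ * Jmat n * S = Jmat n ∧ (S⁻¹ * A * S).IsDiag) ↔
    ∃ N : Matrix (Fin n ⊕ Fin n) (Fin n ⊕ Fin n) ℂ,
      Nᴴ * N = N * Nᴴ ∧
      N * ((Jmat n)ᵀ * Nᴴ * Jmat n) = 0 ∧
      ((Jmat n)ᵀ * Nᴴ * Jmat n) * N = 0 ∧
      A = N - (Jmat n)ᵀ * Nᴴ * Jmat n := by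
  simpa [Jmat_eq_neg_J, isStarNormal_iff, commute_iff_eq, star_eq_conjTranspose,
    symplecticAdjoint] using stmt16_general A
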